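/- arXiv:1502.02743 — 3 statements merged into one kernel-verified Lean document; each statement's English description precedes it below -/
import Mathlib

section
/- For w > 0, the integral ∫₀^∞ sin(wt)/(e^{2πt} − 1) dt equals (1/2)(1/(e^w − 1) + 1/2 − 1/w). -/
open Real MeasureTheory Set

lemma aux_int (w a : ℝ) (ha : 0 < a) :
    IntegrableOn (fun t : ℝ => Real.sin (w * t) * Real.exp (-a * t)) (Ioi 0) ∧
    ∫ t in Ioi (0 : ℝ), Real.sin (w * t) * Real.exp (-a * t) = w / (a ^ 2 + w ^ 2) := by
  have hre : ((-a : ℂ) + w * Complex.I).re < 0 := by simpa using ha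
  have h1 := integrableOn_exp_mul_complex_Ioi hre 0
  have h2 := integral_exp_mul_complex_Ioi hre 0
  have h3 : (fun t : ℝ => Real.sin (w * t) * Real.exp (-a * t)) =
      fun t : ℝ => RCLike.im (Complex.exp (((-a : ℂ) + w * Complex.I) * t)) := by
    ext t
    simp [Complex.exp_im, mul_comm]
  refine ⟨?_, ?_⟩
  · rw [h3]; exact h1.im
  · rw [h3, integral_im h1, h2]
    simp [Complex.div_im, Complex.normSq_apply]
    ring

lemma aux_tint (a : ℝ) (ha : 0 < a) :
    IntegrableOn (fun t : ℝ => t * Real.exp (-a * t)) (Ioi 0) ∧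
    ∫ t in Ioi (0 : ℝ), t * Real.exp (-a * t) = 1 / a ^ 2 := by
  have h := Real.integral_rpow_mul_exp_neg_mul_Ioi (a := 2) (r := a) (by norm_num) ha
  norm_num at h
  have e : ∫ t in Ioi (0 : ℝ), t * Real.exp (-a * t) = 1 / a ^ 2 := by
    rw [one_div, ← h]
    simp
  refine ⟨?_, e⟩
  by_contra hc
  rw [integral_undef hc] at e
  have : 0 < 1 / a ^ 2 := by positivity
  linarith

lemma aux_cot (w : ℝ) (hw : 0 < w) :
    ∑' n : ℕ, w / ((2 * π * (n + 1)) ^ 2 + w ^ 2) =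
      (1 / 2) * (1 / (Real.exp w - 1) + 1 / 2 - 1 / w) := by
  have hpi := Real.pi_pos
  set x : ℂ := (w / (2 * π) : ℝ) * Complex.I with hx
  have him : 0 < x.im := by
    rw [hx, Complex.im_ofReal_mul, Complex.I_im, mul_one]; positivity
  have hxm : x ∈ Complex.integerComplement := by
    rintro ⟨m, hm⟩
    rw [← hm] at him
    simp at him
  have h := cot_series_rep' hxm
  have hpc : (π : ℂ) ≠ 0 := by exact_mod_cast hpi.ne'
  have hwc : (w : ℂ) ≠ 0 := by exact_mod_cast hw.ne'
  have ht : ∀ n : ℕ, (1 / (x - (n + 1)) + 1 / (x + (n + 1)) : ℂ) =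
      (-(4 * π) * Complex.I) * ((w / ((2 * π * (n + 1)) ^ 2 + w ^ 2) : ℝ) : ℂ) := by
    intro n
    have hd : ((2 * π * (n + 1)) ^ 2 + w ^ 2 : ℂ) ≠ 0 := by
      have : ((2 * π * (n + 1)) ^ 2 + w ^ 2 : ℝ) ≠ 0 := by positivity
      exact_mod_cast this
    have hd1 : x - (n + 1) ≠ 0 := by
      intro h0
      have := congrArg Complex.im h0
      simp at this; linarith
    have hd2 : x + (n + 1) ≠ 0 := by
      intro h0
      have := congrArg Complex.im h0
      simp at this; linarith
    have hx2 : (2 * π) * x = w * Complex.I := by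
      rw [hx]; push_cast; field_simp
    have hden : ((2 * π * (n + 1)) ^ 2 + w ^ 2 : ℂ) = -(2*π)^2 * ((x - (n + 1)) * (x + (n + 1))) := by
      have : ((2 * π) * x) ^ 2 = -(w:ℂ)^2 := by rw [hx2, mul_pow, Complex.I_sq]; ring
      linear_combination this
    push_cast
    rw [hden]
    field_simp
    linear_combination (4 : ℂ) * hx2
  simp_rw [ht] at h
  rw [tsum_mul_left, ← Complex.ofReal_tsum] at h
  have hE : 0 < Real.exp w - 1 := by
    have := Real.add_one_lt_exp hw.ne'
    linarith
  have hEc : (Complex.exp w - 1 : ℂ) ≠ 0 := by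
    have := hE.ne'
    exact_mod_cast this
  have hcot : Complex.cot (π * x) = -Complex.I * ((Complex.exp w + 1) / (Complex.exp w - 1)) := by
    rw [Complex.cot_eq_exp_ratio]
    have : 2 * Complex.I * (π * x) = -(w : ℂ) := by
      rw [hx]; push_cast; field_simp; linear_combination Complex.I_sq
    rw [this, Complex.exp_neg]
    have h0 := Complex.exp_ne_zero w
    have h1 : (1 - (Complex.exp w)⁻¹) ≠ 0 := by
      intro h; apply hEc; field_simp at h; simpa using h
    rw [div_eq_iff (mul_ne_zero Complex.I_ne_zero h1)]
    field_simp
    linear_combination (Complex.exp w + 1) * Complex.I_sq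
  have hxinv : 1 / x = -(2 * π / w) * Complex.I := by
    have hx0 : x ≠ 0 := by rintro h0; rw [h0] at him; simp at him
    rw [div_eq_iff hx0, hx]; push_cast; field_simp; linear_combination Complex.I_sq
  rw [hcot, hxinv] at h
  apply Complex.ofReal_injective
  push_cast at h ⊢
  have h4 : (-(4 * π) * Complex.I) ≠ 0 := by simp [hpc]
  apply mul_left_cancel₀ h4
  rw [← h]
  field_simp
  ring

theorem stmt_0 (w : ℝ) (hw : 0 < w) :
    ∫ t in Ioi (0 : ℝ), Real.sin (w * t) / (Real.exp (2 * π * t) - 1) =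
      (1 / 2) * (1 / (Real.exp w - 1) + 1 / 2 - 1 / w) := by
  have hpi := Real.pi_pos
  have hpos : ∀ n : ℕ, 0 < 2 * π * (n + 1) := fun n => by positivity
  rw [← aux_cot w hw]
  have key := integral_tsum_of_summable_integral_norm (μ := volume.restrict (Ioi (0:ℝ)))
    (F := fun (n : ℕ) (t : ℝ) => Real.sin (w * t) * Real.exp (-(2 * π * (n + 1)) * t))
    (fun n => (aux_int w _ (hpos n)).1) ?_
  · simp_rw [fun n : ℕ => (aux_int w _ (hpos n)).2] at key
    rw [key]
    refine setIntegral_congr_fun measurableSet_Ioi fun t ht => ?_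
    have ht : 0 < t := ht
    set r := Real.exp (-(2 * π * t)) with hr
    have hr1 : r < 1 := by rw [hr, Real.exp_lt_one_iff]; simp; positivity
    have hr0 : 0 < r := Real.exp_pos _
    have he : Real.exp (2 * π * t) = r⁻¹ := by rw [hr, Real.exp_neg, inv_inv]
    have hf : ∀ n : ℕ, Real.exp (-(2 * π * (n + 1)) * t) = r * r ^ n := by
      intro n
      rw [hr, ← Real.exp_nat_mul, ← Real.exp_add]; congr 1; ring
    simp only [hf, he]
    rw [tsum_mul_left, tsum_mul_left, tsum_geometric_of_lt_one hr0.le hr1]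
    have : 1 - r ≠ 0 := by linarith
    have : r⁻¹ - 1 = (1 - r) / r := by field_simp
    rw [this]
    field_simp
  · have hs : Summable fun n : ℕ => w * (1 / (2 * π * ((n:ℝ) + 1)) ^ 2) := by
      have := ((summable_nat_add_iff 1).2 (Real.summable_one_div_nat_pow.2 one_lt_two)).mul_left
        (w / (2 * π) ^ 2)
      refine this.congr fun n => ?_
      push_cast
      field_simp
    refine Summable.of_nonneg_of_le (fun n => integral_nonneg fun t => norm_nonneg _)
      (fun n => ?_) hs
    rw [← (aux_tint _ (hpos n)).2, ← integral_const_mul]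
    refine setIntegral_mono_on (aux_int w _ (hpos n)).1.norm
      ((aux_tint _ (hpos n)).1.const_mul w) measurableSet_Ioi fun t ht => ?_
    have ht : 0 < t := ht
    rw [norm_mul, Real.norm_eq_abs, Real.norm_eq_abs, Real.abs_exp, ← mul_assoc]
    gcongr
    refine Real.abs_sin_le_abs.trans ?_
    rw [abs_of_pos (by positivity)]
end

section
/- Hermite's formula: for Re(a) > 0 and s ∈ ℂ with s ≠ 1, ζ(s,a) = a^{−s}/2 + a^{1−s}/(s−1) + 2 ∫₀^∞ sin(s·arctan(t/a)) / ((a² + t²)^{s/2} (e^{2πt} − 1)) dt, where this gives the analytic continuation of the Hurwitz zeta function. -/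
open Real Complex MeasureTheory Set Finset

/-- The analytically continued Hurwitz zeta function `ζ(s, a)` for real `a > 0`,
expressed via Mathlib's periodic Hurwitz zeta by removing the initial terms. -/
noncomputable def HZ (s : ℂ) (a : ℝ) : ℂ :=
  HurwitzZeta.hurwitzZeta (a : UnitAddCircle) s -
    ∑ j ∈ Finset.range (⌈a⌉ - 1).toNat, ((a : ℂ) - ((⌈a⌉ : ℤ) - 1) + j) ^ (-s)

lemma holo_integral {μ : Measure ℝ} {F : ℂ → ℝ → ℂ} {z0 : ℂ} {R : ℝ} (hR : 0 < R)
    {B : ℝ → ℝ} (hm : ∀ z ∈ Metric.ball z0 R, AEStronglyMeasurable (F z) μ)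
    (hd : ∀ᵐ t ∂μ, DifferentiableOn ℂ (fun z => F z t) (Metric.ball z0 R))
    (hb : ∀ᵐ t ∂μ, ∀ z ∈ Metric.ball z0 R, ‖F z t‖ ≤ B t) (hB : Integrable B μ) :
    DifferentiableAt ℂ (fun z => ∫ t, F z t ∂μ) z0 := by
  have hz0 : z0 ∈ Metric.ball z0 R := Metric.mem_ball_self hR
  have hda : ∀ᵐ t ∂μ, ∀ z ∈ Metric.ball z0 R, HasDerivAt (fun z => F z t) (deriv (fun z => F z t) z) z := by
    filter_upwards [hd] with t ht z hz
    exact (ht.differentiableAt (Metric.isOpen_ball.mem_nhds hz)).hasDerivAt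
  have hsub : Metric.ball z0 (R/2) ⊆ Metric.ball z0 R := Metric.ball_subset_ball (by linarith)
  refine (hasDerivAt_integral_of_dominated_loc_of_deriv_le (𝕜 := ℂ) (F := F) (μ := μ)
    (s := Metric.ball z0 (R/2)) (bound := fun t => B t / (R/4))
    (F' := fun z t => deriv (fun z => F z t) z) (Metric.ball_mem_nhds _ (by linarith)) ?_ ?_ ?_ ?_ ?_ ?_).2.differentiableAt
  · filter_upwards [Metric.ball_mem_nhds z0 hR] with z hz using hm z hz
  · exact hB.mono' (hm z0 hz0) (hb.mono fun t ht => ht z0 hz0)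
  · -- measurability of derivative
    have hu : Filter.Tendsto (fun n : ℕ => z0 + ((R/2/((n:ℝ)+1) : ℝ) : ℂ)) Filter.atTop (nhdsWithin z0 {z0}ᶜ) := by
      rw [tendsto_nhdsWithin_iff]
      constructor
      · have h1 : Filter.Tendsto (fun n : ℕ => R/2/((n:ℝ)+1)) Filter.atTop (nhds 0) := by
          have := (tendsto_one_div_add_atTop_nhds_zero_nat (𝕜 := ℝ)).const_mul (R/2)
          simpa [div_eq_mul_inv] using this
        have h2 := (Complex.continuous_ofReal.tendsto 0).comp h1
        simpa using (tendsto_const_nhds (x := z0)).add h2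
      · refine Filter.Eventually.of_forall fun n => ?_
        have : (R/2/((n:ℝ)+1)) ≠ 0 := by positivity
        simp only [mem_compl_iff, mem_singleton_iff, add_eq_left]
        exact_mod_cast this
    refine aestronglyMeasurable_of_tendsto_ae (u := Filter.atTop) (f := fun n : ℕ => fun t => slope (fun z => F z t) z0 (z0 + ((R/2/((n:ℝ)+1) : ℝ) : ℂ))) ?_ ?_
    · intro n
      simp only [slope, vsub_eq_sub]
      refine ((hm _ ?_).sub (hm _ hz0)).const_smul (𝕜 := ℂ) _
      have hn : (0:ℝ) < (n:ℝ)+1 := by positivity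
      rw [Metric.mem_ball, dist_eq_norm, add_sub_cancel_left, Complex.norm_real, Real.norm_of_nonneg (by positivity)]
      rw [div_lt_iff₀ hn]
      nlinarith
    · filter_upwards [hda] with t ht
      exact (hasDerivAt_iff_tendsto_slope.1 (ht z0 hz0)).comp hu
  · filter_upwards [hd, hb] with t ht htb z hz
    have hcb : Metric.closedBall z (R/4) ⊆ Metric.ball z0 R := by
      intro w hw
      have h1 := Metric.mem_closedBall.1 hw
      have h2 := Metric.mem_ball.1 hz
      have := dist_triangle w z z0
      exact Metric.mem_ball.2 (by linarith)
    refine Complex.norm_deriv_le_of_forall_mem_sphere_norm_le (by linarith) ?_ ?_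
    · apply DifferentiableOn.diffContOnCl
      rw [closure_ball z (by linarith)]
      exact ht.mono hcb
    · intro w hw
      exact htb w (hcb (Metric.sphere_subset_closedBall hw))
  · exact hB.div_const _
  · filter_upwards [hda] with t ht z hz using ht z (hsub hz)

lemma integrable_cpow_exp {s r : ℂ} (hs : 0 < s.re) (hr : 0 < r.re) :
    IntegrableOn (fun x : ℝ => (x:ℂ) ^ (s - 1) * Complex.exp (-(r * x))) (Ioi 0) := by
  have h := integrableOn_rpow_mul_exp_neg_mul_rpow (p := 1) (s := s.re - 1) (b := r.re) (by linarith) one_pos hr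
  refine Integrable.mono' h ?_ ?_
  · refine ContinuousOn.aestronglyMeasurable ?_ measurableSet_Ioi
    refine ContinuousOn.mul (fun x hx => ?_) (by fun_prop)
    exact (continuousAt_ofReal_cpow_const _ _ (Or.inr (ne_of_gt hx))).continuousWithinAt
  · refine (ae_restrict_iff' measurableSet_Ioi).2 (Filter.Eventually.of_forall fun x hx => ?_)
    rw [norm_mul, norm_cpow_eq_rpow_re_of_pos hx, Complex.norm_exp]
    simp

lemma gamma_integral {s r : ℂ} (hs : 0 < s.re) (hr : 0 < r.re) :
    ∫ x in Ioi (0:ℝ), (x:ℂ) ^ (s - 1) * Complex.exp (-(r * x)) = Complex.Gamma s * r ^ (-s) := by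
  have hopen : IsOpen {z : ℂ | 0 < z.re} := isOpen_lt continuous_const continuous_re
  have hL : AnalyticOnNhd ℂ (fun r : ℂ => ∫ x in Ioi (0:ℝ), (x:ℂ) ^ (s - 1) * Complex.exp (-(r * x))) {z : ℂ | 0 < z.re} := by
    refine DifferentiableOn.analyticOnNhd (fun r0 hr0 => ?_) hopen
    have hr0' : 0 < r0.re := hr0
    have hball : ∀ z ∈ Metric.ball r0 (r0.re/2), r0.re / 2 < z.re := by
      intro z hz
      rw [Metric.mem_ball, dist_eq_norm] at hz
      have := Complex.abs_re_le_norm (z - r0)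
      rw [sub_re] at this
      have := abs_le.1 this
      linarith [this.1]
    refine (holo_integral (R := r0.re/2) (B := fun x => x ^ (s.re - 1) * Real.exp (-(r0.re/2) * x ^ (1:ℝ))) (by linarith) ?_ ?_ ?_ ?_).differentiableWithinAt
    · intro z hz
      exact (integrable_cpow_exp hs (by linarith [hball z hz])).aestronglyMeasurable
    · refine Filter.Eventually.of_forall fun x => ?_
      fun_prop
    · refine (ae_restrict_iff' measurableSet_Ioi).2 (Filter.Eventually.of_forall fun x hx z hz => ?_)
      rw [norm_mul, norm_cpow_eq_rpow_re_of_pos hx, Complex.norm_exp]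
      have hx' : 0 < x := hx
      have := hball z hz
      have h3 : (-(z * (x:ℂ))).re = -(z.re * x) := by simp
      rw [h3, Real.rpow_one]
      simp only [sub_re, one_re]
      gcongr
      nlinarith
    · exact integrableOn_rpow_mul_exp_neg_mul_rpow (by linarith) one_pos (by linarith)
  have hRt : AnalyticOnNhd ℂ (fun r : ℂ => Complex.Gamma s * r ^ (-s)) {z : ℂ | 0 < z.re} := by
    refine DifferentiableOn.analyticOnNhd (fun r0 hr0 => ?_) hopen
    refine DifferentiableAt.differentiableWithinAt ?_
    refine (DifferentiableAt.cpow differentiableAt_id (differentiableAt_const _) (Or.inl hr0)).const_mul _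
  have hconn : IsPreconnected {z : ℂ | 0 < z.re} := (convex_halfSpace_re_gt 0).isPreconnected
  refine hL.eqOn_of_preconnected_of_frequently_eq hRt hconn (z₀ := 1) (by simp) ?_ hr
  have hu : Filter.Tendsto (fun n : ℕ => (1:ℂ) + ((1/((n:ℝ)+1) : ℝ) : ℂ)) Filter.atTop (nhdsWithin 1 {1}ᶜ) := by
    rw [tendsto_nhdsWithin_iff]
    constructor
    · have h2 := (Complex.continuous_ofReal.tendsto 0).comp (tendsto_one_div_add_atTop_nhds_zero_nat (𝕜 := ℝ))
      simpa using (tendsto_const_nhds (x := (1:ℂ))).add h2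
    · refine Filter.Eventually.of_forall fun n => ?_
      have : (1/((n:ℝ)+1)) ≠ 0 := by positivity
      simp only [mem_compl_iff, mem_singleton_iff, add_eq_left]
      exact_mod_cast this
  refine hu.frequently (Filter.Frequently.of_forall fun n => ?_)
  have hp : (0:ℝ) < 1 + 1/((n:ℝ)+1) := by positivity
  have := Complex.integral_cpow_mul_exp_neg_mul_Ioi hs hp
  rw [one_div (((1 + 1/((n:ℝ)+1) : ℝ)) : ℂ), Complex.inv_cpow _ _ (by rw [arg_ofReal_of_nonneg hp.le]; exact pi_pos.ne), ← Complex.cpow_neg] at this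
  rw [mul_comm]
  rw [ofReal_add, ofReal_one] at this
  exact this

lemma exp_log_arctan {a t : ℝ} (ha : 0 < a) :
    Complex.exp (((Real.log (a^2+t^2) / 2 : ℝ) : ℂ) + (Real.arctan (t/a) : ℝ) * I) = a + t * I := by
  have hX : 0 < a^2+t^2 := by positivity
  rw [Complex.exp_add, Complex.exp_mul_I, ← ofReal_exp, ← ofReal_cos, ← ofReal_sin,
    Real.cos_arctan, Real.sin_arctan]
  have h1 : Real.exp (Real.log (a^2+t^2) / 2) = √(a^2+t^2) := by
    rw [← Real.log_sqrt hX.le, Real.exp_log (Real.sqrt_pos.2 hX)]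
  have h2 : √(1 + (t/a)^2) = √(a^2+t^2) / a := by
    rw [show 1 + (t/a)^2 = (a^2+t^2)/a^2 by field_simp, Real.sqrt_div hX.le, Real.sqrt_sq ha.le]
  rw [h1, h2]
  have h3 := Real.sqrt_pos.2 hX
  have e1 : √(a^2+t^2) * (1 / (√(a^2+t^2)/a)) = a := by field_simp
  have e2 : √(a^2+t^2) * (t / a / (√(a^2+t^2)/a)) = t := by field_simp
  rw [mul_add, ← mul_assoc, ← ofReal_mul, ← ofReal_mul, e1, e2]

lemma log_arctan {a t : ℝ} (ha : 0 < a) :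
    Complex.log (a + t * I) = ((Real.log (a^2+t^2) / 2 : ℝ) : ℂ) + (Real.arctan (t/a) : ℝ) * I := by
  rw [← exp_log_arctan ha, Complex.log_exp]
  · have := Real.neg_pi_div_two_lt_arctan (t/a)
    simp only [add_im, ofReal_im, mul_im, ofReal_re, I_im, I_re]
    linarith [pi_pos]
  · have := Real.arctan_lt_pi_div_two (t/a)
    simp only [add_im, ofReal_im, mul_im, ofReal_re, I_im, I_re]
    linarith [pi_pos]

lemma cpow_arctan {a t : ℝ} (ha : 0 < a) (s : ℂ) :
    ((a:ℂ) + t * I) ^ (-s) = (((a ^ 2 + t ^ 2 : ℝ) : ℂ) ^ (s / 2))⁻¹ *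
      Complex.exp (-(s * (Real.arctan (t/a) : ℝ)) * I) := by
  have hX : 0 < a^2+t^2 := by positivity
  have h0 : (a:ℂ) + t * I ≠ 0 := by
    rw [← exp_log_arctan ha]; exact Complex.exp_ne_zero _
  rw [Complex.cpow_def_of_ne_zero h0, log_arctan ha,
    Complex.cpow_def_of_ne_zero (by exact_mod_cast hX.ne'), ← Complex.exp_neg, ← Complex.exp_add,
    ← Complex.ofReal_log hX.le]
  congr 1
  push_cast
  ring

lemma sin_gamma {a t : ℝ} (ha : 0 < a) {s : ℂ} (hs : 0 < s.re) :
    ∫ x in Ioi (0:ℝ), (x:ℂ) ^ (s - 1) * Complex.exp (-(a * x)) * Complex.sin (x * t) =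
      Complex.Gamma s * (Complex.sin (s * (Real.arctan (t / a) : ℂ)) / ((a ^ 2 + t ^ 2 : ℝ) : ℂ) ^ (s / 2)) := by
  have h1 := gamma_integral (r := a + t * I) hs (by simpa using ha)
  have h2 := gamma_integral (r := a + (-t : ℝ) * I) hs (by simpa using ha)
  have i1 := integrable_cpow_exp (r := a + t * I) hs (by simpa using ha)
  have i2 := integrable_cpow_exp (r := a + (-t : ℝ) * I) hs (by simpa using ha)
  have h3 : ∀ x : ℝ, (x:ℂ) ^ (s - 1) * Complex.exp (-(a * x)) * Complex.sin (x * t) =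
      ((x:ℂ) ^ (s - 1) * Complex.exp (-((a + t * I) * x)) -
        (x:ℂ) ^ (s - 1) * Complex.exp (-((a + (-t : ℝ) * I) * x))) * (I/2) := by
    intro x
    rw [Complex.sin, show -(((a:ℂ) + t * I) * x) = -(a * x) + -(x * t) * I by ring,
      show -(((a:ℂ) + (-t : ℝ) * I) * x) = -(a * x) + (x * t) * I by push_cast; ring,
      Complex.exp_add, Complex.exp_add]
    ring
  simp_rw [h3]
  rw [integral_mul_const, integral_sub i1 i2, h1, h2, cpow_arctan ha, cpow_arctan ha, neg_sq,
    neg_div, Real.arctan_neg, Complex.sin]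
  rw [ofReal_neg]
  rw [show -(s * -(Real.arctan (t/a) : ℂ)) * I = s * (Real.arctan (t/a) : ℂ) * I by ring]
  ring

lemma HZ_hasSum {a : ℝ} (ha : 0 < a) {s : ℂ} (hs : 1 < s.re) :
    HasSum (fun n : ℕ => 1 / ((n:ℂ) + a) ^ s) (HZ s a) := by
  obtain ⟨N, hN⟩ : ∃ N : ℕ, ⌈a⌉ - 1 = N := by
    have : 0 < ⌈a⌉ := Int.ceil_pos.2 ha
    exact ⟨(⌈a⌉-1).toNat, by omega⟩
  have hN' : (⌈a⌉ : ℝ) = N + 1 := by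
    have : ⌈a⌉ = (N:ℤ) + 1 := by omega
    rw [this]; push_cast; ring
  have hb1 : 0 ≤ a - N := by linarith [Int.ceil_lt_add_one a]
  have hb2 : a - N ≤ 1 := by linarith [Int.le_ceil a]
  have h := HurwitzZeta.hasSum_hurwitzZeta_of_one_lt_re (a := a - N) ⟨hb1, hb2⟩ hs
  have hc : (((a - N : ℝ)) : UnitAddCircle) = (a : UnitAddCircle) := by
    rw [AddCircle.coe_sub]
    have : ((N:ℝ) : UnitAddCircle) = 0 := by
      rw [AddCircle.coe_eq_zero_iff]
      exact ⟨N, by simp⟩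
    rw [this, sub_zero]
  rw [hc] at h
  have h' := (hasSum_nat_add_iff' N).2 h
  have hcC : (⌈a⌉ : ℂ) = N + 1 := by exact_mod_cast congrArg (fun x : ℝ => (x:ℂ)) hN'
  unfold HZ
  rw [hN, Int.toNat_natCast, hcC]
  convert! h' using 1
  · funext n; push_cast; congr 2; ring
  · congr 1
    refine Finset.sum_congr rfl fun j _ => ?_
    rw [Complex.cpow_neg, one_div]
    push_cast
    congr 2
    ring

lemma HZ_mellin {a : ℝ} (ha : 0 < a) {s : ℂ} (hs : 1 < s.re) :
    Complex.Gamma s * HZ s a =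
      ∫ x in Ioi (0:ℝ), (x:ℂ) ^ (s - 1) * (Complex.exp (-(a * x)) * ((1 - Real.exp (-x))⁻¹ : ℝ)) := by
  have hsum := HZ_hasSum ha hs
  have h := hasSum_mellin (ι := ℕ) (a := fun _ => 1) (p := fun n => n + a)
    (F := fun x : ℝ => Complex.exp (-(a * x)) * ((1 - Real.exp (-x))⁻¹ : ℝ)) (s := s)
    (fun i => Or.inr (by positivity)) (by linarith) ?_ ?_
  · have h2 := hsum.mul_left (Complex.Gamma s)
    simp only [ofReal_add, ofReal_natCast, mul_one] at h
    simp only [mul_one_div] at h2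
    have := h2.unique h
    rw [this, mellin]
    rfl
  · intro x hx
    have hx' : 0 < x := hx
    have hlt : Real.exp (-x) < 1 := by rw [Real.exp_lt_one_iff]; linarith
    have hg := (hasSum_geometric_of_lt_one (Real.exp_pos (-x)).le hlt).mul_left (Real.exp (-(a*x)))
    have hg' := Complex.hasSum_ofReal.2 hg
    convert! hg' using 1
    · funext n
      rw [one_mul, ← Real.exp_nat_mul, ← Real.exp_add]
      congr 2; ring
    · push_cast; rfl
  · have := hsum.summable.norm
    refine this.congr fun n => ?_
    have hp : (0:ℝ) < n + a := by positivity
    rw [norm_div, show ((n:ℂ) + a) = ((n + a : ℝ) : ℂ) by push_cast; rfl, norm_cpow_eq_rpow_re_of_pos hp]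

lemma exp_sin_integral {c x : ℝ} (hc : 0 < c) :
    IntegrableOn (fun t : ℝ => Complex.exp (-(c * t)) * Complex.sin (t * x)) (Ioi 0) ∧
    ∫ t in Ioi (0:ℝ), Complex.exp (-(c * t)) * Complex.sin (t * x) = x / (x^2 + c^2) := by
  have h1 := gamma_integral (s := 1) (r := c + x * I) (by simp) (by simpa using hc)
  have h2 := gamma_integral (s := 1) (r := c - x * I) (by simp) (by simpa using hc)
  have i1 := integrable_cpow_exp (s := 1) (r := c + x * I) (by simp) (by simpa using hc)
  have i2 := integrable_cpow_exp (s := 1) (r := c - x * I) (by simp) (by simpa using hc)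
  simp only [sub_self, cpow_zero, one_mul, Complex.Gamma_one, cpow_neg_one] at h1 h2 i1 i2
  have h3 : ∀ t : ℝ, Complex.exp (-(c * t)) * Complex.sin (t * x) =
      (Complex.exp (-((c + x * I) * t)) - Complex.exp (-((c - x * I) * t))) * (I/2) := by
    intro t
    rw [Complex.sin, show -(((c:ℂ) + x * I) * t) = -(c * t) + -(t * x) * I by ring,
      show -(((c:ℂ) - x * I) * t) = -(c * t) + (t * x) * I by ring,
      Complex.exp_add, Complex.exp_add]
    ring
  simp_rw [h3]
  refine ⟨(i1.sub i2).mul_const _, ?_⟩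
  rw [integral_mul_const, integral_sub i1 i2, h1, h2]
  have n1 : (c:ℂ) + x * I ≠ 0 := fun h => by
    have := congrArg Complex.re h; simp at this; linarith
  have n2 : (c:ℂ) - x * I ≠ 0 := fun h => by
    have := congrArg Complex.re h; simp at this; linarith
  have e : (x:ℂ)^2 + c^2 = (c + x * I) * (c - x * I) := by
    ring_nf; rw [I_sq]; ring
  rw [e]
  field_simp
  ring_nf; rw [I_sq]; ring

lemma cot_sum {x : ℝ} (hx : 0 < x) :
    2 * ∑' n : ℕ, ((x:ℂ) / (x^2 + ((2 * π * (n+1) : ℝ) : ℂ)^2)) = ((1 - Real.exp (-x))⁻¹ : ℝ) - 1/2 - 1/(x:ℂ) := by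
  have him : (I * x / (2 * π) : ℂ).im = x / (2 * π) := by
    rw [show (I * x / (2 * π) : ℂ) = ((x / (2*π) : ℝ) : ℂ) * I by push_cast; ring,
      Complex.im_ofReal_mul, I_im, mul_one]
  have hpos : 0 < x / (2 * π) := by positivity
  have hz : (I * x / (2 * π) : ℂ) ∈ Complex.integerComplement := by
    rintro ⟨m, hm⟩
    have h := congrArg Complex.im hm
    rw [him, intCast_im] at h
    linarith
  have h := cot_series_rep' hz
  have hpi : (π:ℂ) ≠ 0 := by exact_mod_cast pi_ne_zero
  have hxc : (x:ℂ) ≠ 0 := by exact_mod_cast hx.ne'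
  have ht : ∀ n : ℕ, (1 / ((I * x / (2 * π) : ℂ) - (n + 1)) + 1 / ((I * x / (2 * π) : ℂ) + (n + 1))) =
      (-4 * π * I) * ((x:ℂ) / (x^2 + ((2 * π * (n+1) : ℝ) : ℂ)^2)) := by
    intro n
    have e : (x:ℂ)^2 + ((2 * π * (n+1) : ℝ) : ℂ)^2 =
        -(4 * π^2) * ((I * x / (2 * π) - (n + 1)) * (I * x / (2 * π) + (n + 1))) := by
      push_cast
      field_simp
      ring_nf
      rw [I_sq]
      ring
    have n1 : (I * x / (2 * π) : ℂ) - (n + 1) ≠ 0 := fun h => by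
      have := congrArg Complex.im h
      rw [sub_im, him, show ((n:ℂ)+1).im = 0 by simp, zero_im] at this
      linarith
    have n2 : (I * x / (2 * π) : ℂ) + (n + 1) ≠ 0 := fun h => by
      have := congrArg Complex.im h
      rw [add_im, him, show ((n:ℂ)+1).im = 0 by simp, zero_im] at this
      linarith
    rw [e]
    set u := (I * x / (2 * π) : ℂ) with hu
    have hxu : (x:ℂ) = -I * (2 * π) * u := by
      rw [hu]; field_simp; rw [I_sq]; ring
    rw [hxu]
    field_simp
    ring_nf
    rw [I_sq]; ring
  simp_rw [ht] at h
  rw [tsum_mul_left, Complex.cot_eq_exp_ratio] at h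
  rw [show 2 * I * (π * (I * x / (2 * π))) = -(x:ℂ) by field_simp; rw [I_sq]] at h
  have hlt : Real.exp (-x) < 1 := by rw [Real.exp_lt_one_iff]; linarith
  push_cast
  have hq : (1:ℂ) - Complex.exp (-x) ≠ 0 := by
    rw [← ofReal_neg, ← ofReal_exp, ← ofReal_one, ← ofReal_sub, Ne, ofReal_eq_zero]; linarith
  push_cast at h
  set S := ∑' n : ℕ, ((x:ℂ) / (x^2 + (2 * π * (n+1) : ℂ)^2)) with hS
  have h4 : (-4 * π * I) * (2 * S) = (-4 * π * I) * ((1 - Complex.exp (-x))⁻¹ - 1/2 - 1/(x:ℂ)) := by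
    rw [mul_left_comm, ← h]
    field_simp
    ring_nf
    simp only [I_sq]
    ring
  exact mul_left_cancel₀ (by simp [I_ne_zero, pi_ne_zero]) h4

lemma legendre {x : ℝ} (hx : 0 < x) :
    (((1 - Real.exp (-x))⁻¹ : ℝ) : ℂ) = 1/2 + 1/(x:ℂ) +
      2 * ∫ t in Ioi (0:ℝ), Complex.sin (x * t) / ((Real.exp (2 * π * t) - 1 : ℝ) : ℂ) := by
  have hc : ∀ n : ℕ, 0 < 2 * π * ((n:ℝ)+1) := fun n => by positivity
  have h := hasSum_integral_of_summable_integral_norm (μ := volume.restrict (Ioi (0:ℝ)))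
    (F := fun n : ℕ => fun t : ℝ => Complex.exp (-((2 * π * (n+1) : ℝ) * t)) * Complex.sin (t * x))
    (fun n => (exp_sin_integral (hc n)).1) ?_
  · simp_rw [fun n => (exp_sin_integral (x := x) (hc n)).2] at h
    have h5 := cot_sum hx
    rw [h.tsum_eq] at h5
    have h6 : ∫ t in Ioi (0:ℝ), Complex.sin (x * t) / ((Real.exp (2 * π * t) - 1 : ℝ) : ℂ) =
        ∫ t in Ioi (0:ℝ), ∑' n : ℕ, Complex.exp (-((2 * π * (n+1) : ℝ) * t)) * Complex.sin (t * x) := by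
      refine setIntegral_congr_fun measurableSet_Ioi fun t ht => ?_
      have ht' : 0 < t := ht
      have hlt : Real.exp (-(2 * π * t)) < 1 := by rw [Real.exp_lt_one_iff]; have : 0 < 2 * π * t := by positivity
                                                   linarith
      have hg := (hasSum_geometric_of_lt_one (Real.exp_pos (-(2*π*t))).le hlt).mul_left (Real.exp (-(2*π*t)))
      have hg' := (Complex.hasSum_ofReal.2 hg).mul_right (Complex.sin (t * x))
      have e : ∀ n : ℕ, Complex.exp (-((2 * π * (n+1) : ℝ) * t)) * Complex.sin (t * x) =
          ((Real.exp (-(2*π*t)) * Real.exp (-(2*π*t)) ^ n : ℝ) : ℂ) * Complex.sin (t * x) := by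
        intro n
        rw [← Real.exp_nat_mul, ← Real.exp_add]
        push_cast
        congr 2; ring
      simp_rw [e]
      rw [hg'.tsum_eq, mul_comm (t:ℂ), div_eq_mul_inv, mul_comm, ← ofReal_inv]
      congr 2
      rw [Real.exp_neg]
      have h1 : 1 < Real.exp (2 * π * t) := by rw [Real.one_lt_exp_iff]; positivity
      have h2 : Real.exp (2 * π * t) - 1 ≠ 0 := by linarith
      field_simp
    rw [h6, h5]
    ring
  · have hs : Summable fun n : ℕ => x * (1 / (2 * π))^2 * (1 / ((n:ℝ)+1)^2) := by
      refine Summable.mul_left _ ?_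
      have := (summable_nat_add_iff 1).2 (Real.summable_one_div_nat_pow.2 (one_lt_two))
      simpa using this
    refine Summable.of_nonneg_of_le (fun n => integral_nonneg fun t => norm_nonneg _) (fun n => ?_) hs
    have hr := Real.integral_rpow_mul_exp_neg_mul_Ioi (a := 2) two_pos (hc n)
    have hi := integrableOn_rpow_mul_exp_neg_mul_rpow (p := 1) (s := 1) (b := 2 * π * ((n:ℝ)+1)) (by norm_num) one_pos (hc n)
    have hi' : IntegrableOn (fun t : ℝ => t ^ ((2:ℝ)-1) * Real.exp (-(2 * π * ((n:ℝ)+1) * t))) (Ioi 0) := by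
      convert hi using 2 with t
      · norm_num
    have e : x * (1 / (2 * π))^2 * (1 / ((n:ℝ)+1)^2) =
        ∫ t in Ioi (0:ℝ), x * (t ^ ((2:ℝ)-1) * Real.exp (-(2 * π * ((n:ℝ)+1) * t))) := by
      rw [integral_const_mul, hr, Real.Gamma_two, Real.rpow_two]
      field_simp
    rw [e]
    refine setIntegral_mono_on ((exp_sin_integral (hc n)).1.norm) (hi'.const_mul x) measurableSet_Ioi fun t ht => ?_
    have ht' : 0 < t := ht
    rw [norm_mul, ← ofReal_mul, ← ofReal_mul, ← ofReal_sin, Complex.norm_exp, Complex.norm_real]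
    have h7 : ‖Real.sin (t * x)‖ ≤ t * x := by
      rw [Real.norm_eq_abs]
      refine (Real.abs_sin_le_abs).trans ?_
      rw [abs_of_pos (by positivity)]
    have h8 : t ^ ((2:ℝ)-1) = t := by norm_num
    rw [h8, ← ofReal_neg, ofReal_re]
    calc _ ≤ Real.exp (-(2 * π * (↑n + 1) * t)) * (t * x) := by gcongr
      _ = _ := by ring

lemma kernel_bound {t : ℝ} (ht : 0 < t) :
    0 < Real.exp (2 * π * t) - 1 ∧ t / (Real.exp (2 * π * t) - 1) ≤ Real.exp (-(π * t)) := by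
  have h1 : 1 < Real.exp (2 * π * t) := by rw [Real.one_lt_exp_iff]; positivity
  refine ⟨by linarith, ?_⟩
  have h2 : π * t ≤ Real.sinh (π * t) := Real.self_le_sinh_iff.2 (by positivity)
  rw [Real.sinh_eq] at h2
  have hE := Real.exp_pos (π * t)
  have h3 : Real.exp (2 * π * t) = Real.exp (π * t) * Real.exp (π * t) := by
    rw [← Real.exp_add]; congr 1; ring
  rw [div_le_iff₀ (by linarith), h3, Real.exp_neg, mul_sub, mul_one, ← mul_assoc, inv_mul_cancel₀ hE.ne', one_mul]
  rw [Real.exp_neg] at h2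
  nlinarith [pi_gt_three]

lemma meas_cpow (s : ℂ) : Measurable (fun x : ℝ => (x:ℂ) ^ s) :=
  (Complex.measurable_ofReal).pow_const s

lemma fubini_integrable {a : ℝ} (ha : 0 < a) {s : ℂ} (hs : 0 < s.re) :
    Integrable (Function.uncurry fun x t : ℝ => (x:ℂ) ^ (s - 1) * Complex.exp (-(a * x)) *
      (Complex.sin (x * t) / ((Real.exp (2 * π * t) - 1 : ℝ) : ℂ)))
      ((volume.restrict (Ioi 0)).prod (volume.restrict (Ioi 0))) := by
  have i1 := integrableOn_rpow_mul_exp_neg_mul_rpow (p := 1) (s := s.re) (b := a) (by linarith) one_pos ha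
  have i2 := exp_neg_integrableOn_Ioi 0 pi_pos
  refine (Integrable.mul_prod i1 i2).mono' ?_ ?_
  · have m1 := meas_cpow (s - 1)
    refine Measurable.aestronglyMeasurable ?_
    unfold Function.uncurry
    have m2 : Measurable fun p : ℝ × ℝ => (p.1:ℂ) ^ (s - 1) := m1.comp measurable_fst
    refine (m2.mul (by fun_prop)).mul (Measurable.div ?_ (by fun_prop))
    exact (by fun_prop : Continuous fun p : ℝ × ℝ => Complex.sin (p.1 * p.2)).measurable
  · rw [Measure.prod_restrict]
    refine (ae_restrict_iff' (measurableSet_Ioi.prod measurableSet_Ioi)).2 (Filter.Eventually.of_forall ?_)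
    rintro ⟨x, t⟩ ⟨hx, ht⟩
    have hx' : 0 < x := hx
    have ht' : 0 < t := ht
    obtain ⟨k1, k2⟩ := kernel_bound ht'
    simp only [Function.uncurry]
    rw [norm_mul, norm_mul, norm_div, norm_cpow_eq_rpow_re_of_pos hx', ← ofReal_mul, ← ofReal_mul, ← ofReal_sin,
      Complex.norm_exp, Complex.norm_real, Complex.norm_real, Real.norm_of_nonneg k1.le, ← ofReal_neg, ofReal_re]
    have h7 : ‖Real.sin (x * t)‖ ≤ x * t := by
      rw [Real.norm_eq_abs]
      refine (Real.abs_sin_le_abs).trans ?_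
      rw [abs_of_pos (by positivity)]
    have h8 : x ^ s.re = x ^ (s - 1).re * x := by
      rw [sub_re, one_re, Real.rpow_sub_one hx'.ne']; field_simp
    rw [h8, Real.rpow_one]
    calc _ ≤ x ^ (s-1).re * Real.exp (-(a * x)) * (x * t / (Real.exp (2 * π * t) - 1)) := by gcongr
      _ = x ^ (s-1).re * x * Real.exp (-(a * x)) * (t / (Real.exp (2 * π * t) - 1)) := by ring
      _ ≤ x ^ (s-1).re * x * Real.exp (-(a * x)) * Real.exp (-(π * t)) := by gcongr
      _ = _ := by simp only [neg_mul]

lemma hermite_right {a : ℝ} (ha : 0 < a) {s : ℂ} (hs : 1 < s.re) :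
    HZ s a = (a : ℂ) ^ (-s) / 2 + (a : ℂ) ^ (1 - s) / (s - 1) +
      2 * ∫ t in Ioi (0 : ℝ),
        Complex.sin (s * (Real.arctan (t / a) : ℂ)) /
          (((a ^ 2 + t ^ 2 : ℝ) : ℂ) ^ (s / 2) * ((Real.exp (2 * π * t) - 1 : ℝ) : ℂ)) := by
  have hs0 : 0 < s.re := by linarith
  have hs1 : 0 < (s - 1).re := by simpa using hs
  have hG : Complex.Gamma s ≠ 0 := Complex.Gamma_ne_zero_of_re_pos hs0
  have hsne : s - 1 ≠ 0 := fun h => by rw [h] at hs1; simp at hs1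
  have hfub := fubini_integrable ha hs0
  have hswap := integral_integral_swap hfub
  have i3 := hfub.integral_prod_left
  have i1 := integrable_cpow_exp (r := a) hs0 (by simpa using ha)
  have i2 := integrable_cpow_exp (r := a) hs1 (by simpa using ha)
  have g1 := gamma_integral (r := a) hs0 (by simpa using ha)
  have g2 := gamma_integral (r := a) hs1 (by simpa using ha)
  simp only [Function.uncurry] at i3
  have hGr : Complex.Gamma s = (s - 1) * Complex.Gamma (s - 1) := by
    have := Complex.Gamma_add_one (s - 1) hsne
    rwa [sub_add_cancel] at this
  have key : Complex.Gamma s * HZ s a = ∫ x in Ioi (0:ℝ),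
      ((x:ℂ) ^ (s - 1) * Complex.exp (-(a * x)) * (1/2) + (x:ℂ) ^ (s - 1 - 1) * Complex.exp (-(a * x)) +
        2 * ∫ t in Ioi (0:ℝ), (x:ℂ) ^ (s - 1) * Complex.exp (-(a * x)) *
      (Complex.sin (x * t) / ((Real.exp (2 * π * t) - 1 : ℝ) : ℂ))) := by
    rw [HZ_mellin ha hs]
    refine setIntegral_congr_fun measurableSet_Ioi fun x hx => ?_
    have hx' : 0 < x := hx
    have hxc : (x:ℂ) ≠ 0 := by exact_mod_cast hx'.ne'
    beta_reduce
    rw [legendre hx', integral_const_mul, Complex.cpow_sub (s - 1) 1 hxc, cpow_one]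
    ring
  have h3 : ∫ t in Ioi (0:ℝ), ∫ x in Ioi (0:ℝ), (x:ℂ) ^ (s - 1) * Complex.exp (-(a * x)) *
      (Complex.sin (x * t) / ((Real.exp (2 * π * t) - 1 : ℝ) : ℂ)) =
      Complex.Gamma s * ∫ t in Ioi (0 : ℝ),
        Complex.sin (s * (Real.arctan (t / a) : ℂ)) /
          (((a ^ 2 + t ^ 2 : ℝ) : ℂ) ^ (s / 2) * ((Real.exp (2 * π * t) - 1 : ℝ) : ℂ)) := by
    rw [← integral_const_mul]
    refine integral_congr_ae (Filter.Eventually.of_forall fun t => ?_)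
    simp only [← mul_div_assoc]
    rw [integral_div, sin_gamma ha hs0]
    simp only [div_eq_mul_inv, mul_inv]
    ring
  have i12 : Integrable (fun x : ℝ => (x:ℂ) ^ (s - 1) * Complex.exp (-(a * x)) * (1/2) +
      (x:ℂ) ^ (s - 1 - 1) * Complex.exp (-(a * x))) (volume.restrict (Ioi 0)) :=
    (i1.mul_const _).add i2
  rw [integral_add i12 (i3.const_mul 2), integral_add (i1.mul_const _) i2,
    integral_mul_const, integral_const_mul, hswap, h3, g1, g2] at key
  refine mul_left_cancel₀ hG ?_
  rw [key, neg_sub]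
  have : Complex.Gamma s * ((a:ℂ) ^ (1 - s) / (s - 1)) = Complex.Gamma (s - 1) * (a:ℂ) ^ (1 - s) := by
    rw [hGr]; field_simp
  rw [mul_add, mul_add, this]
  ring

lemma norm_sin_le' (z : ℂ) : ‖Complex.sin z‖ ≤ ‖z‖ * Real.exp ‖z‖ := by
  have h1 := Complex.norm_exp_sub_sum_le_norm_mul_exp (-z * I) 1
  have h2 := Complex.norm_exp_sub_sum_le_norm_mul_exp (z * I) 1
  simp only [Finset.range_one, Finset.sum_singleton, pow_zero, Nat.factorial_zero, Nat.cast_one, div_one,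
    norm_mul, norm_neg, norm_I, mul_one, pow_one] at h1 h2
  have e : Complex.sin z = ((Complex.exp (-z * I) - 1) - (Complex.exp (z * I) - 1)) * (I / 2) := by
    rw [Complex.sin]; ring
  rw [e, norm_mul]
  have h3 := norm_sub_le (Complex.exp (-z * I) - 1) (Complex.exp (z * I) - 1)
  have h4 : ‖I / 2‖ = 1/2 := by simp
  rw [h4]
  linarith

lemma log_bound {a t M : ℝ} (ha : 0 < a) (ht : 0 < t) (hM : 1 ≤ M) :
    M / 2 * |Real.log (a^2+t^2)| ≤ (M * |Real.log a| + a + M * Real.log M) + t := by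
  have hX : 0 < a^2+t^2 := by positivity
  have hlM := Real.log_nonneg hM
  have u1 : Real.log (a^2+t^2) ≤ 2 * Real.log (a+t) := by
    have := Real.log_le_log hX (show a^2+t^2 ≤ (a+t)^2 by nlinarith [mul_pos ha ht])
    rwa [Real.log_pow] at this
  have u2 := Real.log_le_sub_one_of_pos (show 0 < (a+t)/M by positivity)
  rw [Real.log_div (by positivity) (by positivity)] at u2
  have u3 : M * Real.log (a+t) ≤ a + t - M + M * Real.log M := by
    have : M * (Real.log (a+t) - Real.log M) ≤ M * ((a+t)/M - 1) := by gcongr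
    have e : M * ((a+t)/M - 1) = a + t - M := by field_simp
    linarith
  have l1 : 2 * Real.log a ≤ Real.log (a^2+t^2) := by
    have := Real.log_le_log (show 0 < a^2 by positivity) (show a^2 ≤ a^2+t^2 by nlinarith)
    rwa [Real.log_pow] at this
  have l2 := neg_abs_le (Real.log a)
  have p1 : 0 ≤ M * |Real.log a| := by positivity
  have p2 : 0 ≤ M * Real.log M := by positivity
  rcases abs_cases (Real.log (a^2+t^2)) with ⟨h, _⟩ | ⟨h, _⟩ <;> rw [h]
  · nlinarith
  · nlinarith

lemma hermite_entire {a : ℝ} (ha : 0 < a) (z0 : ℂ) :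
    DifferentiableAt ℂ (fun s : ℂ => ∫ t in Ioi (0 : ℝ),
        Complex.sin (s * (Real.arctan (t / a) : ℂ)) /
          (((a ^ 2 + t ^ 2 : ℝ) : ℂ) ^ (s / 2) * ((Real.exp (2 * π * t) - 1 : ℝ) : ℂ))) z0 := by
  set M := ‖z0‖ + 1 with hMdef
  have hM : 1 ≤ M := by have := norm_nonneg z0; linarith
  have hMb : ∀ z ∈ Metric.ball z0 1, ‖z‖ ≤ M := by
    intro z hz
    rw [Metric.mem_ball, dist_eq_norm] at hz
    have := norm_le_norm_add_norm_sub' z z0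
    linarith
  set C := M * |Real.log a| + a + M * Real.log M with hC
  refine holo_integral (R := 1) (B := fun t => (M / a * Real.exp (M * 2) * Real.exp C) * Real.exp (-(π - 1) * t)) one_pos ?_ ?_ ?_ ?_
  · intro z hz
    refine Measurable.aestronglyMeasurable ?_
    refine Measurable.div ?_ (Measurable.mul ?_ (by fun_prop))
    · exact (by fun_prop : Continuous fun t : ℝ => Complex.sin (z * (Real.arctan (t / a) : ℂ))).measurable
    · exact (meas_cpow (z/2)).comp (by fun_prop : Measurable fun t : ℝ => a^2+t^2)
  · refine (ae_restrict_iff' measurableSet_Ioi).2 (Filter.Eventually.of_forall fun t ht => ?_)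
    have ht' : 0 < t := ht
    have hX : 0 < a^2+t^2 := by positivity
    have hXc : ((a^2+t^2 : ℝ) : ℂ) ≠ 0 := by exact_mod_cast hX.ne'
    have hE : ((Real.exp (2 * π * t) - 1 : ℝ) : ℂ) ≠ 0 := by exact_mod_cast (kernel_bound ht').1.ne'
    intro z hz
    refine DifferentiableAt.differentiableWithinAt ?_
    refine DifferentiableAt.div (by fun_prop) (DifferentiableAt.mul_const ?_ _) ?_
    · exact DifferentiableAt.const_cpow (by fun_prop) (Or.inl hXc)
    · refine mul_ne_zero ?_ hE
      rw [Ne, Complex.cpow_eq_zero_iff]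
      exact fun h => hXc h.1
  · refine (ae_restrict_iff' measurableSet_Ioi).2 (Filter.Eventually.of_forall fun t ht z hz => ?_)
    have ht' : 0 < t := ht
    have hX : 0 < a^2+t^2 := by positivity
    obtain ⟨k1, k2⟩ := kernel_bound ht'
    have hzM := hMb z hz
    have hta : 0 < t / a := by positivity
    have a0 : 0 ≤ Real.arctan (t/a) := Real.arctan_nonneg.2 hta.le
    have a1 : Real.arctan (t/a) ≤ t / a := by
      have := Real.le_tan a0 (Real.arctan_lt_pi_div_two _)
      rwa [Real.tan_arctan] at this
    have a2 : Real.arctan (t/a) ≤ 2 := by linarith [Real.arctan_lt_pi_div_two (t/a), pi_lt_four]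
    have b1 : ‖Complex.sin (z * (Real.arctan (t / a) : ℂ))‖ ≤ M * (t/a) * Real.exp (M * 2) := by
      refine (norm_sin_le' _).trans ?_
      rw [norm_mul, Complex.norm_real, Real.norm_of_nonneg a0]
      gcongr
    have b2 : (‖((a^2+t^2 : ℝ) : ℂ) ^ (z/2)‖)⁻¹ ≤ Real.exp (C + t) := by
      rw [norm_cpow_eq_rpow_re_of_pos hX, ← Real.rpow_neg hX.le, Real.rpow_def_of_pos hX]
      refine Real.exp_le_exp.2 (le_trans ?_ (log_bound ha ht' hM))
      have e : (z/2).re = z.re / 2 := by simp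
      rw [e]
      have h1 : |z.re| ≤ M := (Complex.abs_re_le_norm z).trans hzM
      calc Real.log (a^2+t^2) * -(z.re/2) ≤ |Real.log (a^2+t^2) * -(z.re/2)| := le_abs_self _
        _ = |z.re| / 2 * |Real.log (a^2+t^2)| := by
          rw [abs_mul, abs_neg, abs_div, abs_two, mul_comm]
        _ ≤ _ := by gcongr
    rw [norm_div, norm_mul, Complex.norm_real, Real.norm_of_nonneg k1.le]
    have hE := Real.exp_pos (C + t)
    calc _ = ‖Complex.sin (z * (Real.arctan (t / a) : ℂ))‖ * (‖((a^2+t^2 : ℝ) : ℂ) ^ (z/2)‖)⁻¹ * (Real.exp (2 * π * t) - 1)⁻¹ := by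
          rw [div_eq_mul_inv, mul_inv, ← mul_assoc]
      _ ≤ (M * (t/a) * Real.exp (M * 2)) * Real.exp (C + t) * (Real.exp (2 * π * t) - 1)⁻¹ := by gcongr
      _ = (M / a * Real.exp (M * 2)) * Real.exp (C + t) * (t / (Real.exp (2 * π * t) - 1)) := by
          simp only [div_eq_mul_inv]; ring
      _ ≤ (M / a * Real.exp (M * 2)) * Real.exp (C + t) * Real.exp (-(π * t)) := by gcongr
      _ = _ := by
          rw [mul_assoc, ← Real.exp_add, mul_assoc _ (Real.exp C), ← Real.exp_add]
          congr 2; ring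
  · exact (exp_neg_integrableOn_Ioi 0 (by linarith [pi_gt_three])).const_mul _

theorem stmt_2 (a : ℝ) (ha : 0 < a) (s : ℂ) (hs : s ≠ 1) :
    HZ s a = (a : ℂ) ^ (-s) / 2 + (a : ℂ) ^ (1 - s) / (s - 1) +
      2 * ∫ t in Ioi (0 : ℝ),
        Complex.sin (s * (Real.arctan (t / a) : ℂ)) /
          (((a ^ 2 + t ^ 2 : ℝ) : ℂ) ^ (s / 2) * ((Real.exp (2 * π * t) - 1 : ℝ) : ℂ)) := by
  have hac : (a:ℂ) ≠ 0 := by exact_mod_cast ha.ne'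
  have hconn : IsPreconnected ({1}ᶜ : Set ℂ) :=
    (isConnected_compl_singleton_of_one_lt_rank (by simp) 1).isPreconnected
  have hL : AnalyticOnNhd ℂ (fun s => HZ s a) {1}ᶜ := by
    refine DifferentiableOn.analyticOnNhd (fun z hz => ?_) isOpen_compl_singleton
    refine DifferentiableAt.differentiableWithinAt ?_
    refine (HurwitzZeta.differentiableAt_hurwitzZeta _ hz).sub ?_
    refine DifferentiableAt.fun_sum fun j _ => ?_
    refine DifferentiableAt.const_cpow (by fun_prop) (Or.inl ?_)
    have h1 : 0 < a - (⌈a⌉ - 1) + j := by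
      have := Int.ceil_lt_add_one a
      have : (0:ℝ) ≤ j := by positivity
      linarith
    have h2 : (a:ℂ) - ((⌈a⌉ : ℤ) - 1) + j = ((a - (⌈a⌉ - 1) + j : ℝ) : ℂ) := by push_cast; rfl
    rw [h2]
    exact_mod_cast h1.ne'
  have hR : AnalyticOnNhd ℂ (fun s : ℂ => (a : ℂ) ^ (-s) / 2 + (a : ℂ) ^ (1 - s) / (s - 1) +
      2 * ∫ t in Ioi (0 : ℝ),
        Complex.sin (s * (Real.arctan (t / a) : ℂ)) /
          (((a ^ 2 + t ^ 2 : ℝ) : ℂ) ^ (s / 2) * ((Real.exp (2 * π * t) - 1 : ℝ) : ℂ))) {1}ᶜ := by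
    refine DifferentiableOn.analyticOnNhd (fun z hz => ?_) isOpen_compl_singleton
    refine DifferentiableAt.differentiableWithinAt ?_
    refine DifferentiableAt.add (DifferentiableAt.add ?_ ?_) ((hermite_entire ha z).const_mul 2)
    · exact (DifferentiableAt.const_cpow (by fun_prop) (Or.inl hac)).div_const _
    · exact (DifferentiableAt.const_cpow (by fun_prop) (Or.inl hac)).div (by fun_prop) (sub_ne_zero.2 hz)
  refine hL.eqOn_of_preconnected_of_eventuallyEq hR hconn (z₀ := 2) (by simp) ?_ hs
  refine Filter.eventuallyEq_of_mem
    ((isOpen_lt continuous_const continuous_re).mem_nhds (show (1:ℝ) < (2:ℂ).re by norm_num)) ?_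
  intro z hz
  exact hermite_right ha hz
end

section
/- For Re(a) > 0, n a nonnegative integer and 0 ≤ 2n < Re(s): ∫₀^∞ t^{2n} sin(s·arctan(t/a)) / ((a² + t²)^{s/2} (e^{2πt} − 1)) dt = (−1)^n (2n)!/(2Γ(s)) ∫₀^∞ e^{−aw} w^{s−2n−1} L_{2n}^{s−2n−1}(aw) (1/(e^w − 1) + 1/2 − 1/w) dw. -/
open Real Complex MeasureTheory Set Finset

/-- Generalized (associated) Laguerre polynomial with complex parameter. -/
noncomputable def laguerre (n : ℕ) (k x : ℂ) : ℂ :=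
  ∑ j ∈ Finset.range (n + 1),
    (-1) ^ j * Complex.Gamma (n + k + 1) /
      (Complex.Gamma (k + j + 1) * (Nat.factorial (n - j) : ℂ) * (Nat.factorial j : ℂ)) * x ^ j

lemma aux_intble (c r : ℂ) (hc : 0 < c.re) (hr : 0 < r.re) :
    IntegrableOn (fun w : ℝ => (w : ℂ) ^ (c - 1) * Complex.exp (-(r * w))) (Ioi 0) := by
  have h := integrableOn_rpow_mul_exp_neg_mul_rpow (s := c.re - 1) (p := 1) (b := r.re)
    (by linarith) one_pos hr
  refine Integrable.mono' h ?_ ?_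
  · refine ContinuousOn.aestronglyMeasurable (fun w hw => ContinuousAt.continuousWithinAt ?_)
      measurableSet_Ioi
    refine ContinuousAt.mul (Complex.continuousAt_ofReal_cpow_const _ _ (Or.inr (ne_of_gt hw))) ?_
    fun_prop
  · filter_upwards [ae_restrict_mem measurableSet_Ioi] with w hw
    rw [norm_mul, Complex.norm_cpow_eq_rpow_re_of_pos hw, Complex.norm_exp]
    simp

lemma aux_deriv (c r : ℂ) (hc : 0 < c.re) (hr : 0 < r.re) :
    DifferentiableAt ℂ (fun r : ℂ => ∫ w in Ioi (0:ℝ), (w : ℂ) ^ (c - 1) * Complex.exp (-(r * w))) r := by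
  have h := hasDerivAt_integral_of_dominated_loc_of_deriv_le (μ := volume.restrict (Ioi (0:ℝ)))
    (F := fun (r : ℂ) (w : ℝ) => (w : ℂ) ^ (c - 1) * Complex.exp (-(r * w)))
    (F' := fun (r : ℂ) (w : ℝ) => (w : ℂ) ^ (c - 1) * (Complex.exp (-(r * w)) * (-w)))
    (x₀ := r) (s := {z : ℂ | r.re / 2 < z.re})
    (bound := fun w : ℝ => w ^ c.re * Real.exp (-(r.re/2) * w ^ (1:ℝ)))
    ?_ ?_ ?_ ?_ ?_ ?_ ?_
  · exact h.2.differentiableAt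
  · exact (isOpen_lt continuous_const Complex.continuous_re).mem_nhds (by simp; linarith)
  · filter_upwards [(isOpen_lt continuous_const Complex.continuous_re).mem_nhds hr] with z hz
    exact (aux_intble c z hc hz).aestronglyMeasurable
  · exact aux_intble c r hc hr
  · have := ((aux_intble c r hc hr).aestronglyMeasurable).mul
      (Continuous.aestronglyMeasurable (μ := volume.restrict (Ioi (0:ℝ))) (f := fun w : ℝ => -(w:ℂ)) (by fun_prop))
    refine this.congr (Filter.Eventually.of_forall fun w => ?_)
    simp only [Pi.mul_apply]; ring
  · filter_upwards [ae_restrict_mem measurableSet_Ioi] with w hw z hz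
    have hw' : 0 < w := hw
    have hz' : r.re / 2 < z.re := hz
    rw [norm_mul, norm_mul, Complex.norm_cpow_eq_rpow_re_of_pos hw, Complex.norm_exp]
    simp only [norm_neg, Complex.norm_real, Real.norm_eq_abs, abs_of_pos hw', rpow_one]
    have : w ^ c.re = w ^ (c - 1).re * w := by
      rw [← rpow_add_one hw'.ne']; simp
    rw [this]
    have h2 : Real.exp (-(z * w)).re ≤ Real.exp (-(r.re/2) * w) := by
      apply Real.exp_le_exp.mpr; simp; nlinarith
    have : 0 ≤ w ^ (c - 1).re * w := by positivity
    nlinarith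
  · exact integrableOn_rpow_mul_exp_neg_mul_rpow (by linarith) one_pos (by linarith)
  · refine Filter.Eventually.of_forall fun w z hz => ?_
    refine HasDerivAt.const_mul _ ?_
    have : HasDerivAt (fun z : ℂ => -(z * w)) (-(w:ℂ)) z := by
      simpa using ((hasDerivAt_id' z).mul_const (w:ℂ)).fun_neg
    exact this.cexp

lemma aux_gamma (c r : ℂ) (hc : 0 < c.re) (hr : 0 < r.re) :
    ∫ w in Ioi (0:ℝ), (w : ℂ) ^ (c - 1) * Complex.exp (-(r * w)) = (1 / r) ^ c * Complex.Gamma c := by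
  have hopen : IsOpen {z : ℂ | 0 < z.re} := isOpen_lt continuous_const Complex.continuous_re
  have h1 : AnalyticOnNhd ℂ (fun r : ℂ => ∫ w in Ioi (0:ℝ), (w : ℂ) ^ (c - 1) * Complex.exp (-(r * w))) {z : ℂ | 0 < z.re} :=
    DifferentiableOn.analyticOnNhd (fun z hz => (aux_deriv c z hc hz).differentiableWithinAt) hopen
  have h2 : AnalyticOnNhd ℂ (fun r : ℂ => (1 / r) ^ c * Complex.Gamma c) {z : ℂ | 0 < z.re} := by
    refine DifferentiableOn.analyticOnNhd (fun z hz => DifferentiableAt.differentiableWithinAt ?_) hopen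
    have hz' : 0 < z.re := hz
    have hz0 : z ≠ 0 := by rintro rfl; simp at hz'
    refine DifferentiableAt.mul_const ?_ _
    refine DifferentiableAt.cpow_const ?_ ?_
    · exact (differentiableAt_const _).div differentiableAt_id hz0
    · left
      rw [one_div, Complex.inv_re]
      exact div_pos hz' (Complex.normSq_pos.mpr hz0)
  have hc : Convex ℝ {z : ℂ | 0 < z.re} := convex_halfSpace_re_gt 0
  refine h1.eqOn_of_preconnected_of_frequently_eq h2 hc.isPreconnected (z₀ := 1) (by simp) ?_ hr
  have ht : Filter.Tendsto (fun x : ℝ => (x : ℂ)) (nhdsWithin 1 {1}ᶜ) (nhdsWithin 1 {1}ᶜ) := by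
    refine tendsto_nhdsWithin_iff.mpr ⟨?_, ?_⟩
    · exact (by simpa using (Complex.continuous_ofReal.tendsto 1) : Filter.Tendsto (fun x : ℝ => (x : ℂ)) (nhds 1) (nhds 1)).mono_left nhdsWithin_le_nhds
    · filter_upwards [self_mem_nhdsWithin] with x hx
      simpa using hx
  refine ht.frequently (Filter.Eventually.frequently ?_)
  filter_upwards [nhdsWithin_le_nhds (lt_mem_nhds (zero_lt_one' ℝ))] with x hx
  exact Complex.integral_cpow_mul_exp_neg_mul_Ioi (by assumption) hx

lemma aux_log (a t : ℝ) (ha : 0 < a) (s : ℂ) :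
    (1 / ((a:ℂ) + t * I)) ^ s = Complex.exp (-(s * (Real.arctan (t / a)) * I)) / ((a ^ 2 + t ^ 2 : ℝ) : ℂ) ^ (s / 2) := by
  have hpos : 0 < a^2 + t^2 := by positivity
  have hre : 0 < ((a:ℂ) + t * I).re := by simpa using ha
  have h0 : (a:ℂ) + t * I ≠ 0 := by intro h; rw [h] at hre; simp at hre
  have harg : |((a:ℂ) + t * I).arg| < π / 2 := abs_arg_lt_pi_div_two_iff.mpr (Or.inl hre)
  have harg2 : ((a:ℂ) + t * I).arg = Real.arctan (t / a) := by
    have := Complex.tan_arg ((a:ℂ) + t * I)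
    have h3 : ((a:ℂ) + t * I).im / ((a:ℂ) + t * I).re = t / a := by simp
    rw [h3] at this
    rw [← this, Real.arctan_tan (abs_lt.mp harg).1 (abs_lt.mp harg).2]
  have hnorm : Real.log ‖(a:ℂ) + t * I‖ = Real.log (a^2+t^2) / 2 := by
    rw [Complex.norm_add_mul_I, Real.log_sqrt hpos.le]
  have hlog : Complex.log ((a:ℂ) + t * I) = (Real.log (a^2+t^2) / 2 : ℝ) + (Real.arctan (t/a) : ℂ) * I := by
    rw [Complex.log, hnorm, harg2]
  rw [one_div, Complex.cpow_def_of_ne_zero (inv_ne_zero h0), Complex.log_inv _ (by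
    have := (abs_lt.mp harg).2; intro h; rw [h] at this; linarith [Real.pi_pos]), hlog,
    Complex.cpow_def_of_ne_zero (by exact_mod_cast hpos.ne'), ← Complex.ofReal_log hpos.le, ← Complex.exp_sub]
  congr 1
  push_cast
  ring

lemma aux_expand (m : ℕ) (a w : ℝ) (hw : 0 < w) (s r : ℂ) :
    Complex.exp (-(r * w)) * (w : ℂ) ^ (s - m - 1) * laguerre m (s - m - 1) ((a : ℂ) * w) =
    ∑ j ∈ Finset.range (m + 1), ((-1) ^ j * Complex.Gamma s /
      (Complex.Gamma (s - m + j) * (Nat.factorial (m - j) : ℂ) * (Nat.factorial j : ℂ)) * (a:ℂ) ^ j) *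
      ((w : ℂ) ^ ((s - m + j) - 1) * Complex.exp (-(r * w))) := by
  have hw0 : (w:ℂ) ≠ 0 := by exact_mod_cast hw.ne'
  rw [laguerre, Finset.mul_sum]
  refine Finset.sum_congr rfl fun j _ => ?_
  rw [show (s - m + j) - 1 = (s - m - 1) + (j:ℂ) by ring, Complex.cpow_add _ _ hw0, Complex.cpow_natCast,
    show (m:ℂ) + (s - m - 1) + 1 = s by ring, show s - m - 1 + (j:ℂ) + 1 = s - m + j by ring, mul_pow]
  ring

lemma aux_lag_intble (m : ℕ) (a : ℝ) (s r : ℂ) (hs : (m:ℝ) < s.re) (hr : 0 < r.re) :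
    IntegrableOn (fun w : ℝ => Complex.exp (-(r * w)) * (w : ℂ) ^ (s - m - 1) *
      laguerre m (s - m - 1) ((a : ℂ) * w)) (Ioi 0) := by
  refine IntegrableOn.congr_fun ?_ (fun w hw => (aux_expand m a w hw s r).symm) measurableSet_Ioi
  refine integrable_finsetSum _ fun j _ => Integrable.const_mul ?_ _
  refine aux_intble _ r ?_ hr
  simp; linarith [(Nat.cast_nonneg j : (0:ℝ) ≤ j)]

lemma aux_lag_intble' (m : ℕ) (a : ℝ) (s r : ℂ) (hs : (m:ℝ) < s.re) (hr : 0 < r.re) :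
    IntegrableOn (fun w : ℝ => (Complex.exp (-(r * w)) * (w : ℂ) ^ (s - m - 1) *
      laguerre m (s - m - 1) ((a : ℂ) * w)) * (w:ℂ)) (Ioi 0) := by
  have : IntegrableOn (fun w : ℝ => ∑ j ∈ Finset.range (m + 1), ((-1) ^ j * Complex.Gamma s /
      (Complex.Gamma (s - m + j) * (Nat.factorial (m - j) : ℂ) * (Nat.factorial j : ℂ)) * (a:ℂ) ^ j) *
      ((w : ℂ) ^ ((s - m + j + 1) - 1) * Complex.exp (-(r * w)))) (Ioi 0) := by
    refine integrable_finsetSum _ fun j _ => Integrable.const_mul ?_ _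
    refine aux_intble _ r ?_ hr
    simp; linarith [(Nat.cast_nonneg j : (0:ℝ) ≤ j)]
  refine this.congr_fun (fun w hw => ?_) measurableSet_Ioi
  have hw' : 0 < w := hw
  have hw0 : (w:ℂ) ≠ 0 := by exact_mod_cast hw'.ne'
  simp only
  rw [aux_expand m a w hw s r, Finset.sum_mul]
  refine Finset.sum_congr rfl fun j _ => ?_
  rw [show (s - m + j + 1) - 1 = (s - m + j - 1) + 1 by ring, Complex.cpow_add _ _ hw0, Complex.cpow_one]
  ring

lemma aux_lag_int (m : ℕ) (a : ℝ) (s r : ℂ) (hs : (m:ℝ) < s.re) (hr : 0 < r.re) :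
    ∫ w in Ioi (0:ℝ), Complex.exp (-(r * w)) * (w : ℂ) ^ (s - m - 1) *
      laguerre m (s - m - 1) ((a : ℂ) * w) =
    Complex.Gamma s / (Nat.factorial m : ℂ) * ((1 / r) ^ s * (r - a) ^ m) := by
  have hr0 : r ≠ 0 := by rintro rfl; simp at hr
  have hre : ∀ j : ℕ, 0 < (s - m + j).re := fun j => by
    simp; linarith [(Nat.cast_nonneg j : (0:ℝ) ≤ j)]
  rw [setIntegral_congr_fun measurableSet_Ioi (fun w hw => aux_expand m a w hw s r)]
  rw [integral_finsetSum _ fun j _ => Integrable.const_mul (aux_intble _ r (hre j) hr) _]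
  simp_rw [integral_const_mul]
  rw [sub_eq_neg_add r (a:ℂ), add_pow, Finset.mul_sum, Finset.mul_sum]
  refine Finset.sum_congr rfl fun j hj => ?_
  have hj' : j ≤ m := Nat.lt_succ_iff.mp (Finset.mem_range.mp hj)
  have hG := Complex.Gamma_ne_zero_of_re_pos (hre j)
  have hch : (m.choose j : ℂ) = (Nat.factorial m : ℂ) / ((Nat.factorial j : ℂ) * (Nat.factorial (m - j) : ℂ)) := by
    exact Nat.cast_choose ℂ hj'
  have hm : (Nat.factorial m : ℂ) ≠ 0 := by exact_mod_cast Nat.factorial_ne_zero m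
  have hm1 : (Nat.factorial j : ℂ) ≠ 0 := by exact_mod_cast Nat.factorial_ne_zero j
  have hm2 : (Nat.factorial (m-j) : ℂ) ≠ 0 := by exact_mod_cast Nat.factorial_ne_zero (m-j)
  have hp : (1 / r) ^ (s - m + j) = (1/r)^s * r ^ (m - j) := by
    rw [show s - m + (j:ℂ) = s - ((m - j : ℕ) : ℂ) by push_cast [hj']; ring,
      Complex.cpow_sub _ _ (one_div_ne_zero hr0), Complex.cpow_natCast]
    simp
  rw [aux_gamma _ r (hre j) hr, hp, hch, neg_pow (a:ℂ) j]
  field_simp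

lemma aux_A (n : ℕ) (a t : ℝ) (ha : 0 < a) (s : ℂ) (hs : ((2*n : ℕ):ℝ) < s.re) :
    ∫ w in Ioi (0:ℝ), (Complex.exp (-((a:ℂ) * w)) * (w : ℂ) ^ (s - (2*n:ℕ) - 1) *
      laguerre (2*n) (s - (2*n:ℕ) - 1) ((a : ℂ) * w)) * ((Real.sin (t * w) : ℝ) : ℂ) =
    Complex.Gamma s / (Nat.factorial (2*n) : ℂ) * (-1) ^ n *
      ((t:ℂ)^(2*n) * Complex.sin (s * (Real.arctan (t / a) : ℂ)) / ((a ^ 2 + t ^ 2 : ℝ) : ℂ) ^ (s / 2)) := by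
  have h1 : 0 < ((a:ℂ) + t * I).re := by simpa using ha
  have h2 : 0 < ((a:ℂ) + (-t : ℝ) * I).re := by simpa using ha
  have e : ∀ w : ℝ, (Complex.exp (-((a:ℂ) * w)) * (w : ℂ) ^ (s - (2*n:ℕ) - 1) *
      laguerre (2*n) (s - (2*n:ℕ) - 1) ((a : ℂ) * w)) * ((Real.sin (t * w) : ℝ) : ℂ) =
      (Complex.exp (-(((a:ℂ) + t * I) * w)) * (w : ℂ) ^ (s - (2*n:ℕ) - 1) *
      laguerre (2*n) (s - (2*n:ℕ) - 1) ((a : ℂ) * w)) * (I/2) -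
      (Complex.exp (-(((a:ℂ) + (-t : ℝ) * I) * w)) * (w : ℂ) ^ (s - (2*n:ℕ) - 1) *
      laguerre (2*n) (s - (2*n:ℕ) - 1) ((a : ℂ) * w)) * (I/2) := by
    intro w
    rw [show -(((a:ℂ) + t * I) * w) = -((a:ℂ) * w) + -(t*w : ℂ) * I by ring,
     show -(((a:ℂ) + (-t:ℝ) * I) * w) = -((a:ℂ) * w) + (t*w : ℂ) * I by push_cast; ring,
     Complex.exp_add, Complex.exp_add, Complex.ofReal_sin, Complex.sin]
    push_cast
    ring
  simp_rw [e]
  rw [integral_sub ((aux_lag_intble _ a s _ hs h1).mul_const _) ((aux_lag_intble _ a s _ hs h2).mul_const _),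
    integral_mul_const, integral_mul_const, aux_lag_int _ a s _ hs h1, aux_lag_int _ a s _ hs h2,
    aux_log a t ha, aux_log a (-t) ha, Complex.sin]
  have i2 : (I:ℂ)^(2*n) = (-1)^n := by rw [pow_mul, I_sq]
  simp only [add_sub_cancel_left, mul_pow, i2, neg_div, Real.arctan_neg, neg_sq]
  push_cast
  rw [Even.neg_pow (even_two_mul n)]
  ring_nf

lemma aux_sin_bound (t w : ℝ) (ht : 0 < t) (hw : 0 < w) : |Real.sin (t * w)| ≤ t * w := by
  have := Real.abs_sin_le_abs (x := t * w)
  rwa [abs_of_pos (mul_pos ht hw)] at this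

lemma aux_sinexp (w b : ℝ) (hb : 0 < b) :
    IntegrableOn (fun t : ℝ => ((Real.sin (t * w) * Real.exp (-(b * t)) : ℝ) : ℂ)) (Ioi 0) ∧
    ∫ t in Ioi (0:ℝ), ((Real.sin (t * w) * Real.exp (-(b * t)) : ℝ) : ℂ) = w / (b ^ 2 + w ^ 2) := by
  have e : ∀ t : ℝ, ((Real.sin (t * w) * Real.exp (-(b * t)) : ℝ) : ℂ) =
      Complex.exp ((-b - w * I) * t) * (I/2) - Complex.exp ((-b + w * I) * t) * (I/2) := by
    intro t
    rw [show ((-b - w * I) * t : ℂ) = -(b * t : ℂ) + -(t*w : ℂ) * I by ring,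
     show ((-b + w * I) * t : ℂ) = -((b:ℂ) * t) + (t*w : ℂ) * I by ring, Complex.exp_add, Complex.exp_add]
    push_cast
    rw [Complex.sin]
    ring
  have h1 : (-b - w * I : ℂ).re < 0 := by simpa using hb
  have h2 : (-b + w * I : ℂ).re < 0 := by simpa using hb
  have i1 := (integrableOn_exp_mul_complex_Ioi h1 0).mul_const (I/2)
  have i2 := (integrableOn_exp_mul_complex_Ioi h2 0).mul_const (I/2)
  simp_rw [e]
  refine ⟨i1.sub i2, ?_⟩
  rw [integral_sub i1 i2, integral_mul_const, integral_mul_const, integral_exp_mul_complex_Ioi h1,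
    integral_exp_mul_complex_Ioi h2]
  have n1 : (-b - w * I : ℂ) ≠ 0 := by intro h; rw [h] at h1; simp at h1
  have n2 : (-b + w * I : ℂ) ≠ 0 := by intro h; rw [h] at h2; simp at h2
  have n3 : (b^2 + w^2 : ℂ) = (-b - w * I : ℂ) * (-b + w * I : ℂ) := by
    ring_nf; simp
  rw [n3]
  simp only [Complex.ofReal_zero, mul_zero, Complex.exp_zero]
  field_simp
  ring_nf
  simp
  try ring

lemma aux_B (w : ℝ) (hw : 0 < w) :
    ∫ t in Ioi (0:ℝ), ((Real.sin (t * w) / (Real.exp (2 * π * t) - 1) : ℝ) : ℂ) =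
      1 / 2 * ((1 / (Real.exp w - 1) + 1 / 2 - 1 / w : ℝ) : ℂ) := by
  have hpi := Real.pi_pos
  have hb : ∀ k : ℕ, 0 < 2 * π * (k + 1) := fun k => by positivity
  have key := hasSum_integral_of_summable_integral_norm (μ := volume.restrict (Ioi (0:ℝ)))
    (F := fun (k : ℕ) (t : ℝ) => ((Real.sin (t * w) * Real.exp (-((2 * π * (k + 1)) * t)) : ℝ) : ℂ))
    (fun k => (aux_sinexp w _ (hb k)).1) ?_
  · have hL : ∀ t ∈ Ioi (0:ℝ), ∑' k : ℕ, ((Real.sin (t * w) * Real.exp (-((2 * π * (k + 1)) * t)) : ℝ) : ℂ) =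
        ((Real.sin (t * w) / (Real.exp (2 * π * t) - 1) : ℝ) : ℂ) := by
      intro t ht
      have ht' : 0 < t := ht
      rw [← Complex.ofReal_tsum]
      congr 1
      have hlt : Real.exp (-(2 * π * t)) < 1 := by
        rw [Real.exp_lt_one_iff]; have := mul_pos hpi ht'; linarith
      have e : ∀ k : ℕ, Real.sin (t * w) * Real.exp (-((2 * π * (k + 1)) * t)) =
          (Real.sin (t*w) * Real.exp (-(2 * π * t))) * Real.exp (-(2 * π * t)) ^ k := by
        intro k
        rw [← Real.exp_nat_mul, mul_assoc (Real.sin (t * w)), ← Real.exp_add]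
        congr 2; ring
      simp_rw [e]
      rw [tsum_mul_left, tsum_geometric_of_lt_one (Real.exp_pos _).le hlt, Real.exp_neg]
      have h1 : 1 < Real.exp (2 * π * t) := Real.one_lt_exp_iff.mpr (by positivity)
      have h2 : Real.exp (2 * π * t) - 1 ≠ 0 := by linarith
      field_simp
    rw [← setIntegral_congr_fun measurableSet_Ioi hL, ← key.tsum_eq]
    simp_rw [fun k : ℕ => (aux_sinexp w _ (hb k)).2]
    set x : ℂ := ((w / (2 * π) : ℝ) : ℂ) * I with hx
    have hpc : (π : ℂ) ≠ 0 := by exact_mod_cast hpi.ne'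
    have hwc : (w : ℂ) ≠ 0 := by exact_mod_cast hw.ne'
    have him : x.im ≠ 0 := by
      rw [hx, Complex.im_ofReal_mul, Complex.I_im, mul_one]
      positivity
    have hxc : x ∈ Complex.integerComplement := by
      rintro ⟨m, hm⟩
      have := congrArg Complex.im hm
      simp only [Complex.intCast_im] at this
      exact him this.symm
    have hcot := cot_series_rep' hxc
    have hterm : ∀ k : ℕ, (w:ℂ) / (((2 * π * (k+1) : ℝ) : ℂ) ^ 2 + w ^ 2) =
        (I / (4 * π)) * (1 / (x - (k + 1)) + 1 / (x + (k + 1))) := by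
      intro k
      have n1 : x - (k+1) ≠ 0 := by
        intro h; have := congrArg Complex.im h; simp at this
        exact him this
      have n2 : x + (k+1) ≠ 0 := by
        intro h; have := congrArg Complex.im h; simp at this
        exact him this
      have e1 : ((2 * π * (k+1) : ℝ) : ℂ) ^ 2 + w ^ 2 = -(4 * π^2) * ((x - (k+1)) * (x + (k+1))) := by
        have : x^2 = -(w / (2 * π))^2 := by rw [hx, mul_pow, I_sq]; push_cast; ring
        rw [show (x - (k+1)) * (x + (k+1)) = x^2 - (k+1)^2 by ring, this]
        push_cast; field_simp; ring
      have e2 : (w:ℂ) = -(I * (2 * π) * x) := by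
        rw [hx]; push_cast; field_simp; simp
      rw [e1]
      nth_rewrite 1 [e2]
      field_simp
      ring
    simp_rw [hterm]
    rw [tsum_mul_left, ← hcot, Complex.cot_eq_exp_ratio]
    have e3 : 2 * I * (π * x) = ((-w : ℝ) : ℂ) := by
      rw [hx]; push_cast; field_simp; simp
    rw [e3, ← Complex.ofReal_exp, Real.exp_neg, hx]
    have h1 : 1 < Real.exp w := Real.one_lt_exp_iff.mpr hw
    have h2 : ((Real.exp w : ℝ):ℂ) - 1 ≠ 0 := by
      rw [← Complex.ofReal_one, ← Complex.ofReal_sub]; exact_mod_cast (by linarith : Real.exp w - 1 ≠ 0)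
    have h3 : ((Real.exp w : ℝ):ℂ) ≠ 0 := by exact_mod_cast (Real.exp_pos w).ne'
    have h4 : (1:ℂ) - ((Real.exp w : ℝ):ℂ)⁻¹ ≠ 0 := by
      intro h; apply h2; field_simp at h; simpa using h
    have e4 : (((Real.exp w : ℝ):ℂ)⁻¹ + 1) / (I * (1 - ((Real.exp w : ℝ):ℂ)⁻¹)) = -I * (((Real.exp w : ℝ):ℂ) + 1) / (((Real.exp w : ℝ):ℂ) - 1) := by
      field_simp
      simp
      ring
    rw [Complex.ofReal_inv, e4]
    push_cast at h2 h3 ⊢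
    field_simp
    ring_nf
    simp
    try ring
  · have hsum : Summable fun k : ℕ => w / (2 * π)^2 * (1 / ((k:ℝ) + 1)^2) := by
      refine Summable.mul_left _ ?_
      have := (summable_nat_add_iff 1).mpr (Real.summable_one_div_nat_pow.mpr (one_lt_two))
      simpa using this
    refine Summable.of_nonneg_of_le (fun k => integral_nonneg fun t => norm_nonneg _) (fun k => ?_) hsum
    have hI := Real.integral_rpow_mul_exp_neg_mul_Ioi (a := 2) (r := 2 * π * (k+1)) two_pos (hb k)
    have hInt := integrableOn_rpow_mul_exp_neg_mul_rpow (s := 1) (p := 1) (b := 2 * π * (k+1))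
      (by norm_num) one_pos (hb k)
    have : w / (2 * π)^2 * (1 / ((k:ℝ) + 1)^2) =
        ∫ t in Ioi (0:ℝ), w * (t ^ ((2:ℝ) - 1) * Real.exp (-((2 * π * (k+1)) * t))) := by
      rw [integral_const_mul, hI, Real.Gamma_two]
      rw [Real.rpow_two]
      field_simp
    rw [this]
    refine setIntegral_mono_on (aux_sinexp w _ (hb k)).1.norm ?_ measurableSet_Ioi ?_
    · refine Integrable.const_mul ?_ _
      refine hInt.congr_fun (fun t ht => ?_) measurableSet_Ioi
      norm_num
    · intro t ht
      rw [Complex.norm_real, norm_mul, Real.norm_eq_abs, Real.norm_eq_abs, abs_of_pos (Real.exp_pos _)]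
      have h := aux_sin_bound t w ht hw
      have h2 := (Real.exp_pos (-((2 * π * (k+1)) * t))).le
      norm_num
      nlinarith

lemma aux_bose_intble :
    IntegrableOn (fun t : ℝ => t / (Real.exp (2 * π * t) - 1)) (Ioi 0) := by
  have h := (integrableOn_exp_mul_Ioi (a := -π) (by linarith [Real.pi_pos]) 0).const_mul (1 / (2 * π))
  refine Integrable.mono' h ?_ ?_
  · exact (by fun_prop : Measurable (fun t : ℝ => t / (Real.exp (2 * π * t) - 1))).aestronglyMeasurable
  · filter_upwards [ae_restrict_mem measurableSet_Ioi] with t ht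
    have ht' : 0 < t := ht
    have hpi := Real.pi_pos
    have h1 : 1 < Real.exp (2 * π * t) := Real.one_lt_exp_iff.mpr (by positivity)
    rw [Real.norm_eq_abs, abs_of_nonneg (div_nonneg ht'.le (by linarith)), div_le_iff₀ (by linarith)]
    have hs := Real.self_le_sinh_iff.mpr (by positivity : 0 ≤ π * t)
    rw [Real.sinh_eq] at hs
    have e1 : Real.exp (-π * t) * (Real.exp (2 * π * t) - 1) = Real.exp (π * t) - Real.exp (-(π * t)) := by
      rw [mul_sub, ← Real.exp_add]; ring_nf
    rw [mul_assoc, e1, div_mul_eq_mul_div, le_div_iff₀ (by positivity)]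
    linarith

theorem stmt_6 (n : ℕ) (a : ℝ) (ha : 0 < a) (s : ℂ) (hs : (2 * n : ℝ) < s.re) :
    ∫ t in Ioi (0 : ℝ),
        (t : ℂ) ^ (2 * n) * Complex.sin (s * (Real.arctan (t / a) : ℂ)) /
          (((a ^ 2 + t ^ 2 : ℝ) : ℂ) ^ (s / 2) * ((Real.exp (2 * π * t) - 1 : ℝ) : ℂ)) =
      (-1) ^ n * (Nat.factorial (2 * n) : ℂ) / (2 * Complex.Gamma s) *
        ∫ w in Ioi (0 : ℝ),
          Complex.exp (-(a : ℂ) * w) * (w : ℂ) ^ (s - 2 * n - 1) *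
            laguerre (2 * n) (s - 2 * n - 1) ((a : ℂ) * w) *
            ((1 / (Real.exp w - 1) + 1 / 2 - 1 / w : ℝ) : ℂ) := by
  have hs' : ((2*n : ℕ):ℝ) < s.re := by push_cast; exact hs
  have hs0 : 0 < s.re := lt_of_le_of_lt (Nat.cast_nonneg _) hs'
  have har : 0 < (a:ℂ).re := by simpa using ha
  have hG := Complex.Gamma_ne_zero_of_re_pos hs0
  have hF : (Nat.factorial (2*n) : ℂ) ≠ 0 := by exact_mod_cast Nat.factorial_ne_zero _
  have hc : (2 * n : ℂ) = ((2*n : ℕ) : ℂ) := by push_cast; rfl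
  rw [hc]
  simp_rw [neg_mul]
  set G : ℝ → ℂ := fun w => Complex.exp (-((a : ℂ) * w)) * (w : ℂ) ^ (s - (2 * n : ℕ) - 1) *
            laguerre (2 * n) (s - (2 * n : ℕ) - 1) ((a : ℂ) * w) with hGd
  have hGi : IntegrableOn G (Ioi 0) := aux_lag_intble (2*n) a s a hs' har
  have hGi' : IntegrableOn (fun w : ℝ => G w * w) (Ioi 0) := aux_lag_intble' (2*n) a s a hs' har
  have hneg : ((-1:ℂ) ^ n) * (-1) ^ n = 1 := by rw [← mul_pow]; simp
  have hLHS : ∀ t ∈ Ioi (0:ℝ), (t : ℂ) ^ (2 * n) * Complex.sin (s * (Real.arctan (t / a) : ℂ)) /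
          (((a ^ 2 + t ^ 2 : ℝ) : ℂ) ^ (s / 2) * ((Real.exp (2 * π * t) - 1 : ℝ) : ℂ)) =
        ((-1) ^ n * (Nat.factorial (2 * n) : ℂ) / Complex.Gamma s) *
        ∫ w in Ioi (0:ℝ), G w * ((Real.sin (t * w) / (Real.exp (2 * π * t) - 1) : ℝ) : ℂ) := by
    intro t ht
    have e : ∀ w : ℝ, G w * ((Real.sin (t * w) / (Real.exp (2 * π * t) - 1) : ℝ) : ℂ) =
        G w * ((Real.sin (t * w) : ℝ) : ℂ) * (((Real.exp (2 * π * t) - 1 : ℝ) : ℂ))⁻¹ := by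
      intro w
      rw [Complex.ofReal_div]; ring
    simp_rw [e]
    rw [integral_mul_const, hGd, aux_A n a t ha s hs']
    set Q := (t : ℂ) ^ (2 * n) * Complex.sin (s * (Real.arctan (t / a) : ℂ))
    have : ∀ P E g f : ℂ, g ≠ 0 → f ≠ 0 → Q / (P * E) = (-1) ^ n * f / g * (g / f * (-1)^n * (Q / P) * E⁻¹) := by
      intro P E g f hg hf
      calc Q / (P * E) = ((-1:ℂ) ^ n * (-1) ^ n) * (f / f) * (g / g) * (Q / (P * E)) := by
            rw [hneg, div_self hf, div_self hg]; ring
        _ = _ := by ring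
    exact this _ _ _ _ hG hF
  rw [setIntegral_congr_fun measurableSet_Ioi hLHS, integral_const_mul]
  rw [integral_integral_swap]
  · have : ∀ w ∈ Ioi (0:ℝ), ∫ t in Ioi (0:ℝ), G w * ((Real.sin (t * w) / (Real.exp (2 * π * t) - 1) : ℝ) : ℂ) =
        1 / 2 * (G w * ((1 / (Real.exp w - 1) + 1 / 2 - 1 / w : ℝ) : ℂ)) := by
      intro w hw
      rw [integral_const_mul, aux_B w hw]; ring
    rw [setIntegral_congr_fun measurableSet_Ioi this, integral_const_mul]
    ring
  · have hprod := Integrable.mul_prod aux_bose_intble.ofReal hGi' (L := ℂ)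
    refine hprod.mono ?_ ?_
    · refine AEStronglyMeasurable.mul hGi.aestronglyMeasurable.comp_snd ?_
      exact (by fun_prop : Measurable (fun z : ℝ × ℝ => ((Real.sin (z.1 * z.2) / (Real.exp (2 * π * z.1) - 1) : ℝ) : ℂ))).aestronglyMeasurable
    · rw [Measure.prod_restrict]
      filter_upwards [ae_restrict_mem (measurableSet_Ioi.prod measurableSet_Ioi)] with z hz
      obtain ⟨t, w⟩ := z
      have ht : 0 < t := hz.1
      have hw : 0 < w := hz.2
      have h1 : 1 < Real.exp (2 * π * t) := Real.one_lt_exp_iff.mpr (by have := Real.pi_pos; positivity)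
      have hb := aux_sin_bound t w ht hw
      simp only [Function.uncurry, norm_mul, Complex.norm_real, norm_div, Real.norm_eq_abs, Complex.coe_algebraMap,
        RCLike.norm_ofReal, abs_div, abs_of_pos ht, abs_of_pos hw]
      have h2 : 0 < |Real.exp (2 * π * t) - 1| := abs_pos.mpr (by linarith)
      calc ‖G w‖ * (|Real.sin (t * w)| / |Real.exp (2 * π * t) - 1|) 
          ≤ ‖G w‖ * ((t * w) / |Real.exp (2 * π * t) - 1|) := by gcongr
        _ = _ := by ring
end
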